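/- Let d be a graph pseudometric on a set X with edge set E, let xy ∈ [X]² \ E, and let r be a real number with ď(x,y) ≤ r ≤ d̂(x,y). Then the function D = d ∪ {⟨xy,r⟩} on the graph E ∪ {xy} is a graph pseudometric. -/

import Mathlib

open scoped Classical

universe u

namespace GraphMetricPaper

variable {X : Type u}

/-- The vertex set `V = ⋃ E` of a graph given by an adjacency relation `E`. -/
def Vtx (E : X → X → Prop) : Set X := {x | ∃ y, E x y}

/-- Two points are joined by a walk in the graph `E`. -/
def Joined (E : X → X → Prop) (x y : X) : Prop :=
  ∃ (n : ℕ) (c : ℕ → X), c 0 = x ∧ c n = y ∧ ∀ i, i < n → E (c i) (c (i + 1))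

/-- The set of weights of walks from `x` to `y`. -/
def walkSums (E : X → X → Prop) (d : X → X → ℝ) (x y : X) : Set ℝ :=
  {s | ∃ (n : ℕ) (c : ℕ → X), c 0 = x ∧ c n = y ∧ (∀ i, i < n → E (c i) (c (i + 1))) ∧
    s = ∑ i ∈ Finset.range n, d (c i) (c (i + 1))}

/-- The shortest-path pseudometric `d̂` determined by a weight function `d` on a graph `E`. -/
noncomputable def hatd (E : X → X → Prop) (d : X → X → ℝ) (x y : X) : ℝ :=
  sInf (walkSums E d x y)

/-- The function `ď` bounding the possible extensions of `d` from below: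
`ď(x,y) = sup_{ab ∈ E} max {0, d(ab) - d̂(a,x) - d̂(y,b)}`. -/
noncomputable def checkd (E : X → X → Prop) (d : X → X → ℝ) (x y : X) : ℝ :=
  sSup ({0} ∪ {r | ∃ a b, E a b ∧ r = d a b - hatd E d a x - hatd E d y b})

/-- The pseudometric `d̈` on doubletons:
`d̈(xy,uv) = min {d̂(x,u) + d̂(y,v), d̂(x,v) + d̂(y,u)}`. -/
noncomputable def ddot (E : X → X → Prop) (d : X → X → ℝ) (x y u v : X) : ℝ :=
  min (hatd E d x u + hatd E d y v) (hatd E d x v + hatd E d y u)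

/-- `d` is a graph pseudometric with edge relation `E`:  `E` is a (symmetric, irreflexive)
connected graph, `d` is a nonnegative symmetric weight on the edges, and `d = d̂` on edges. -/
structure IsGraphPseudometric (E : X → X → Prop) (d : X → X → ℝ) : Prop where
  symm : ∀ ⦃a b⦄, E a b → E b a
  irrefl : ∀ a, ¬ E a a
  wt_symm : ∀ ⦃a b⦄, E a b → d a b = d b a
  nonneg : ∀ ⦃a b⦄, E a b → 0 ≤ d a b
  connected : ∀ x ∈ Vtx E, ∀ y ∈ Vtx E, Joined E x y
  edge_eq : ∀ ⦃a b⦄, E a b → d a b = hatd E d a b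

/-- A graph metric is a graph pseudometric with strictly positive weights. -/
def IsGraphMetric (E : X → X → Prop) (d : X → X → ℝ) : Prop :=
  IsGraphPseudometric E d ∧ ∀ ⦃a b⦄, E a b → 0 < d a b

/-- A floppy graph pseudometric: `ď(x,y) < d̂(x,y)` for every `xy ∈ [V]² \ E`. -/
def FloppyPseudometric (E : X → X → Prop) (d : X → X → ℝ) : Prop :=
  IsGraphPseudometric E d ∧
    ∀ x ∈ Vtx E, ∀ y ∈ Vtx E, x ≠ y → ¬ E x y → checkd E d x y < hatd E d x y

/-- A floppy graph metric: `ď(x,y) < d̂(x,y)` for every `xy ∈ [V]² \ E`. -/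
def FloppyMetric (E : X → X → Prop) (d : X → X → ℝ) : Prop :=
  IsGraphMetric E d ∧
    ∀ x ∈ Vtx E, ∀ y ∈ Vtx E, x ≠ y → ¬ E x y → checkd E d x y < hatd E d x y

/-- The edge relation of the one-step extension `E ∪ {xy}`. -/
def extEdge (E : X → X → Prop) (x y : X) : X → X → Prop :=
  fun a b => E a b ∨ (a = x ∧ b = y) ∨ (a = y ∧ b = x)

/-- The weight function of the one-step extension `d ∪ {⟨xy, r⟩}`. -/
noncomputable def extWt (d : X → X → ℝ) (x y : X) (r : ℝ) : X → X → ℝ :=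
  fun a b => if (a = x ∧ b = y) ∨ (a = y ∧ b = x) then r else d a b

/-- The set `[V]² \ E` of unordered pairs of distinct vertices that are not edges. -/
def nonEdgePairs (E : X → X → Prop) : Set (Sym2 X) :=
  {e | ∃ a b : X, e = s(a, b) ∧ a ≠ b ∧ a ∈ Vtx E ∧ b ∈ Vtx E ∧ ¬ E a b}

/-- A set of (unordered) weighted pairs, presented as a relation `R`, is a full metric
on `V`: it is symmetric, its domain is exactly `[V]²`, it is single-valued, positive,
and satisfies the triangle inequality. -/
def IsFullMetricRel (V : Set X) (R : X → X → ℝ → Prop) : Prop :=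
  (∀ a b r, R a b r → R b a r) ∧
  (∀ a b r, R a b r → a ∈ V ∧ b ∈ V ∧ a ≠ b) ∧
  (∀ a b, a ∈ V → b ∈ V → a ≠ b → ∃ r, R a b r) ∧
  (∀ a b r s, R a b r → R a b s → r = s) ∧
  (∀ a b r, R a b r → 0 < r) ∧
  (∀ a b c r s t, R a b r → R b c s → R a c t → t ≤ r + s)

/-- A weight function `D` on `[V]²` is a full metric on `V`. -/
def IsFullMetricOn (V : Set X) (D : X → X → ℝ) : Prop :=
  (∀ a b, a ∈ V → b ∈ V → a ≠ b → D a b = D b a) ∧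
  (∀ a b, a ∈ V → b ∈ V → a ≠ b → 0 < D a b) ∧
  (∀ a b c, a ∈ V → b ∈ V → c ∈ V → a ≠ b → b ≠ c → a ≠ c → D a c ≤ D a b + D b c)

/-- Player I has a winning strategy in the metric-extending game `Game_d(lam, Fam)`:
there are functions `S1, S2` choosing, for each inning `β < lam` and each sequence of
previous answers of player II, a legal doubleton in `[V]²` and a set from `Fam`, such that
for every play of player II respecting the strategy, the resulting relation
`d ∪ {⟨x_α y_α, r_α⟩ : α < lam}` is a full metric on `V`. -/
def WinningStratI (V : Set X) (E : X → X → Prop) (d : X → X → ℝ)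
    (lam : Ordinal.{u}) (Fam : Set (Set ℝ)) : Prop :=
  ∃ (S1 : ∀ β : Ordinal.{u}, β < lam → (∀ α : Ordinal.{u}, α < β → ℝ) → X × X)
    (S2 : ∀ β : Ordinal.{u}, β < lam → (∀ α : Ordinal.{u}, α < β → ℝ) → Set ℝ),
    (∀ β hβ s, S2 β hβ s ∈ Fam) ∧
    (∀ β hβ s, (S1 β hβ s).1 ∈ V ∧ (S1 β hβ s).2 ∈ V ∧ (S1 β hβ s).1 ≠ (S1 β hβ s).2) ∧
    (∀ s : ∀ α : Ordinal.{u}, α < lam → ℝ,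
      (∀ α (hα : α < lam), s α hα ∈ S2 α hα (fun γ hγ => s γ (hγ.trans hα))) →
      IsFullMetricRel V (fun a b r =>
        (E a b ∧ r = d a b) ∨
        ∃ α, ∃ hα : α < lam,
          ((a = (S1 α hα (fun γ hγ => s γ (hγ.trans hα))).1 ∧
            b = (S1 α hα (fun γ hγ => s γ (hγ.trans hα))).2) ∨
           (a = (S1 α hα (fun γ hγ => s γ (hγ.trans hα))).2 ∧
            b = (S1 α hα (fun γ hγ => s γ (hγ.trans hα))).1)) ∧
          r = s α hα))

/-- Player II has a winning strategy in the metric-extending game `Game_d(lam, Fam)`: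
there is a function `T` assigning to each inning `β < lam` and each sequence of moves of
player I (of length `β + 1`) an answer in the set component of the last move, such that
for every legal play of player I, the resulting relation is not a full metric on `V`. -/
def WinningStratII (V : Set X) (E : X → X → Prop) (d : X → X → ℝ)
    (lam : Ordinal.{u}) (Fam : Set (Set ℝ)) : Prop :=
  ∃ T : ∀ β : Ordinal.{u}, β < lam → (∀ α : Ordinal.{u}, α ≤ β → (X × X) × Set ℝ) → ℝ,
    (∀ β hβ p, (p β le_rfl).2 ∈ Fam → T β hβ p ∈ (p β le_rfl).2) ∧
    (∀ p : ∀ α : Ordinal.{u}, α < lam → (X × X) × Set ℝ,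
      (∀ α hα, (p α hα).1.1 ∈ V ∧ (p α hα).1.2 ∈ V ∧ (p α hα).1.1 ≠ (p α hα).1.2 ∧
        (p α hα).2 ∈ Fam) →
      ¬ IsFullMetricRel V (fun a b r =>
        (E a b ∧ r = d a b) ∨
        ∃ α, ∃ hα : α < lam,
          ((a = (p α hα).1.1 ∧ b = (p α hα).1.2) ∨
           (a = (p α hα).1.2 ∧ b = (p α hα).1.1)) ∧
          r = T α hα (fun γ hγ => p γ (lt_of_le_of_lt hγ hα))))

/-- The edge relation of the glued graph `E_d = E_p ∪ ⋃_{f ∈ F} E_f`. -/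
def gluedEdge (Ep : X → X → Prop) (F : Set ((X → X → Prop) × (X → X → ℝ))) :
    X → X → Prop :=
  fun a b => Ep a b ∨ ∃ f ∈ F, f.1 a b

/-- `Λ(v; B) = inf {d̂(a,v) + d̂(v,b) - d̂(a,b) : a, b ∈ B}`. -/
noncomputable def Lam (E : X → X → Prop) (d : X → X → ℝ) (v : X) (B : Set X) : ℝ :=
  sInf {r | ∃ a ∈ B, ∃ b ∈ B, r = hatd E d a v + hatd E d v b - hatd E d a b}

/-- The gluing setup: a graph pseudometric `p = (Ep, wp)` and a family `F` of graph
pseudometrics such that each member meets `V_p`, agrees with `p̂` on the intersection of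
the vertex sets, and distinct members only meet inside `V_p`; `wd` is the glued weight
function `d = p ∪ ⋃ F` on `E_d = E_p ∪ ⋃_{f ∈ F} E_f`. -/
structure GluingSetup (Ep : X → X → Prop) (wp : X → X → ℝ)
    (F : Set ((X → X → Prop) × (X → X → ℝ))) (wd : X → X → ℝ) : Prop where
  hp : IsGraphPseudometric Ep wp
  hF : ∀ f ∈ F, IsGraphPseudometric f.1 f.2
  meet : ∀ f ∈ F, (Vtx f.1 ∩ Vtx Ep).Nonempty
  agree : ∀ f ∈ F, ∀ x ∈ Vtx f.1 ∩ Vtx Ep, ∀ y ∈ Vtx f.1 ∩ Vtx Ep, x ≠ y →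
    hatd f.1 f.2 x y = hatd Ep wp x y
  inter_sub : ∀ f ∈ F, ∀ g ∈ F, f ≠ g → Vtx f.1 ∩ Vtx g.1 ⊆ Vtx Ep
  wd_p : ∀ ⦃a b⦄, Ep a b → wd a b = wp a b
  wd_F : ∀ f ∈ F, ∀ ⦃a b⦄, f.1 a b → wd a b = f.2 a b


section WalkSums

variable {E : X → X → Prop} {d : X → X → ℝ}

lemma zero_mem_walkSums (a : X) : (0 : ℝ) ∈ walkSums E d a a :=
  ⟨0, fun _ => a, rfl, rfl, by simp, by simp⟩

lemma cons_mem_walkSums {a b c : X} {s : ℝ} (hab : E a b) (hs : s ∈ walkSums E d b c) :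
    d a b + s ∈ walkSums E d a c := by
  obtain ⟨n, w, rfl, rfl, hw, rfl⟩ := hs
  refine ⟨n + 1, fun i => Nat.casesOn i a w, rfl, rfl, ?_, ?_⟩
  · rintro (_ | i) hi
    · exact hab
    · exact hw i (by lia)
  · rw [Finset.sum_range_succ', add_comm]
    rfl

lemma edge_mem_walkSums {a b : X} (hab : E a b) : d a b ∈ walkSums E d a b := by
  simpa using cons_mem_walkSums hab (zero_mem_walkSums (d := d) b)

/-- Induction on a walk by removing its first edge. -/
lemma walkSums_induction {b : X} {P : X → ℝ → Prop} (nil : P b 0)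
    (cons : ∀ a c s, E a c → P c s → P a (d a c + s))
    {a : X} {s : ℝ} (hs : s ∈ walkSums E d a b) : P a s := by
  obtain ⟨n, w, rfl, rfl, hw, rfl⟩ := hs
  induction n generalizing w with
  | zero => simpa using nil
  | succ n ih =>
    rw [Finset.sum_range_succ', add_comm]
    exact cons _ _ _ (hw 0 n.succ_pos)
      (ih (fun i => w (i + 1)) nil fun i hi => hw (i + 1) (by lia))

lemma add_mem_walkSums {a b c : X} {s t : ℝ} (hs : s ∈ walkSums E d a b)
    (ht : t ∈ walkSums E d b c) : s + t ∈ walkSums E d a c := by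
  refine walkSums_induction (P := fun a s => s + t ∈ walkSums E d a c) (by simpa using ht) ?_ hs
  intro a c' s hac ih
  rw [add_assoc]
  exact cons_mem_walkSums hac ih

lemma nonneg_of_mem_walkSums (hnn : ∀ ⦃a b⦄, E a b → 0 ≤ d a b) {a b : X} {s : ℝ}
    (hs : s ∈ walkSums E d a b) : 0 ≤ s :=
  walkSums_induction (P := fun _ s => 0 ≤ s) le_rfl
    (fun _ _ _ hac ih => add_nonneg (hnn hac) ih) hs

end WalkSums

namespace IsGraphPseudometric

variable {E : X → X → Prop} {d : X → X → ℝ}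

lemma walkSums_symm (hd : IsGraphPseudometric E d) {a b : X} {s : ℝ}
    (hs : s ∈ walkSums E d a b) : s ∈ walkSums E d b a := by
  refine walkSums_induction (P := fun a s => s ∈ walkSums E d b a) (zero_mem_walkSums b) ?_ hs
  intro a c s hac ih
  rw [add_comm, hd.wt_symm hac]
  exact add_mem_walkSums ih (edge_mem_walkSums (hd.symm hac))

lemma hatd_le (hd : IsGraphPseudometric E d) {a b : X} {s : ℝ}
    (hs : s ∈ walkSums E d a b) : hatd E d a b ≤ s :=
  csInf_le ⟨0, fun _ => nonneg_of_mem_walkSums hd.nonneg⟩ hs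

lemma hatd_nonneg (hd : IsGraphPseudometric E d) (a b : X) : 0 ≤ hatd E d a b :=
  Real.sInf_nonneg fun _ => nonneg_of_mem_walkSums hd.nonneg

lemma hatd_self (hd : IsGraphPseudometric E d) (a : X) : hatd E d a a = 0 :=
  le_antisymm (hd.hatd_le (zero_mem_walkSums a)) (hd.hatd_nonneg a a)

lemma hatd_comm (hd : IsGraphPseudometric E d) (a b : X) : hatd E d a b = hatd E d b a :=
  congrArg sInf (Set.ext fun _ => ⟨hd.walkSums_symm, hd.walkSums_symm⟩)

lemma walkSums_nonempty (hd : IsGraphPseudometric E d) {a b : X} (ha : a ∈ Vtx E)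
    (hb : b ∈ Vtx E) : (walkSums E d a b).Nonempty := by
  obtain ⟨n, w, h0, hn, hw⟩ := hd.connected a ha b hb
  exact ⟨_, n, w, h0, hn, hw, rfl⟩

lemma hatd_triangle (hd : IsGraphPseudometric E d) {a b c : X} (ha : a ∈ Vtx E)
    (hb : b ∈ Vtx E) (hc : c ∈ Vtx E) : hatd E d a c ≤ hatd E d a b + hatd E d b c := by
  rw [← sub_le_iff_le_add]
  refine le_csInf (hd.walkSums_nonempty ha hb) fun s hs => ?_
  rw [sub_le_comm]
  refine le_csInf (hd.walkSums_nonempty hb hc) fun t ht => ?_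
  rw [sub_le_iff_le_add']
  exact hd.hatd_le (add_mem_walkSums hs ht)

lemma bddAbove_checkd (hd : IsGraphPseudometric E d) {x y : X} (hx : x ∈ Vtx E)
    (hy : y ∈ Vtx E) :
    BddAbove ({0} ∪ {r | ∃ a b, E a b ∧ r = d a b - hatd E d a x - hatd E d y b}) := by
  refine ⟨hatd E d x y, ?_⟩
  rintro _ (rfl | ⟨a, b, hab, rfl⟩)
  · exact hd.hatd_nonneg x y
  · have ha : a ∈ Vtx E := ⟨b, hab⟩
    have hb : b ∈ Vtx E := ⟨a, hd.symm hab⟩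
    linarith [hd.edge_eq hab, hd.hatd_triangle ha hx hb, hd.hatd_triangle hx hy hb]

lemma checkd_nonneg (hd : IsGraphPseudometric E d) {x y : X} (hx : x ∈ Vtx E)
    (hy : y ∈ Vtx E) : 0 ≤ checkd E d x y :=
  le_csSup (hd.bddAbove_checkd hx hy) (Or.inl rfl)

lemma sub_le_checkd (hd : IsGraphPseudometric E d) {x y a b : X} (hx : x ∈ Vtx E)
    (hy : y ∈ Vtx E) (hab : E a b) :
    d a b - hatd E d a x - hatd E d y b ≤ checkd E d x y :=
  le_csSup (hd.bddAbove_checkd hx hy) (Or.inr ⟨a, b, hab, rfl⟩)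

end IsGraphPseudometric

section Extension

variable {E : X → X → Prop} {d : X → X → ℝ} {x y : X} {r : ℝ}

lemma extWt_left : extWt d x y r x y = r := if_pos (Or.inl ⟨rfl, rfl⟩)

lemma extWt_right : extWt d x y r y x = r := if_pos (Or.inr ⟨rfl, rfl⟩)

lemma extWt_of_edge (hd : IsGraphPseudometric E d) (hnE : ¬ E x y) {a b : X} (hab : E a b) :
    extWt d x y r a b = d a b := by
  refine if_neg ?_
  rintro (⟨rfl, rfl⟩ | ⟨rfl, rfl⟩)
  · exact hnE hab
  · exact hnE (hd.symm hab)

/-- A walk in the extended graph is at least as long as the distance between its endpoints, either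
in the original graph or through exactly one passage of the new edge. -/
lemma extension_walkSums_lower_bound (hd : IsGraphPseudometric E d) (hvert : ∀ z : X, z ∈ Vtx E)
    (hnE : ¬ E x y) (hr : 0 ≤ r) {a b : X} {s : ℝ}
    (hs : s ∈ walkSums (extEdge E x y) (extWt d x y r) a b) :
    hatd E d a b ≤ s ∨ hatd E d a x + r + hatd E d y b ≤ s ∨
      hatd E d a y + r + hatd E d x b ≤ s := by
  refine walkSums_induction (P := fun a s => hatd E d a b ≤ s ∨
    hatd E d a x + r + hatd E d y b ≤ s ∨ hatd E d a y + r + hatd E d x b ≤ s)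
    (Or.inl (hd.hatd_self b).le) ?_ hs
  have hxx := hd.hatd_self x
  have hyy := hd.hatd_self y
  have hyx := hd.hatd_nonneg y x
  have hxy := hd.hatd_nonneg x y
  rintro a c s (hac | ⟨rfl, rfl⟩ | ⟨rfl, rfl⟩) ih
  · rw [extWt_of_edge hd hnE hac, hd.edge_eq hac]
    have h z := hd.hatd_triangle (hvert a) (hvert c) (hvert z)
    rcases ih with ih | ih | ih
    · exact Or.inl (by linarith [h b])
    · exact Or.inr (Or.inl (by linarith [h x]))
    · exact Or.inr (Or.inr (by linarith [h y]))
  · rw [extWt_left]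
    rcases ih with ih | ih | ih
    · exact Or.inr (Or.inl (by linarith))
    · exact Or.inr (Or.inl (by linarith))
    · exact Or.inl (by linarith)
  · rw [extWt_right]
    rcases ih with ih | ih | ih
    · exact Or.inr (Or.inr (by linarith))
    · exact Or.inl (by linarith)
    · exact Or.inr (Or.inr (by linarith))

end Extension

/-- For every graph pseudometric `d` on a set `X`, every
`xy ∈ [X]² \ E`, and every real `r` with `ď(x,y) ≤ r ≤ d̂(x,y)`, the function
`D = d ∪ {⟨xy, r⟩}` is a graph pseudometric. -/
theorem one_step_extension_pseudometric (E : X → X → Prop) (d : X → X → ℝ)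
    (hd : IsGraphPseudometric E d) (hvert : ∀ z : X, z ∈ Vtx E)
    (x y : X) (hxy : x ≠ y) (hnE : ¬ E x y) (r : ℝ)
    (hr₁ : checkd E d x y ≤ r) (hr₂ : r ≤ hatd E d x y) :
    IsGraphPseudometric (extEdge E x y) (extWt d x y r) := by
  have hr : 0 ≤ r := (hd.checkd_nonneg (hvert x) (hvert y)).trans hr₁
  have nonneg : ∀ ⦃a b⦄, extEdge E x y a b → 0 ≤ extWt d x y r a b := by
    rintro a b (hab | ⟨rfl, rfl⟩ | ⟨rfl, rfl⟩)
    · rw [extWt_of_edge hd hnE hab]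
      exact hd.nonneg hab
    · rwa [extWt_left]
    · rwa [extWt_right]
  refine ⟨?_, ?_, ?_, nonneg, ?_, ?_⟩
  · rintro a b (hab | h | h)
    · exact Or.inl (hd.symm hab)
    · exact Or.inr (Or.inr h.symm)
    · exact Or.inr (Or.inl h.symm)
  · rintro a (ha | ⟨rfl, h⟩ | ⟨rfl, h⟩)
    · exact hd.irrefl a ha
    · exact hxy h
    · exact hxy h.symm
  · rintro a b (hab | ⟨rfl, rfl⟩ | ⟨rfl, rfl⟩)
    · rw [extWt_of_edge hd hnE hab, extWt_of_edge hd hnE (hd.symm hab), hd.wt_symm hab]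
    · rw [extWt_left, extWt_right]
    · rw [extWt_left, extWt_right]
  · intro a _ b _
    obtain ⟨n, w, h0, hn, hw⟩ := hd.connected a (hvert a) b (hvert b)
    exact ⟨n, w, h0, hn, fun i hi => Or.inl (hw i hi)⟩
  · intro a b hab
    refine le_antisymm (le_csInf ⟨_, edge_mem_walkSums hab⟩ fun s hs => ?_)
      (csInf_le ⟨0, fun s hs => ?_⟩ (edge_mem_walkSums hab))
    · have key := extension_walkSums_lower_bound hd hvert hnE hr hs
      rcases hab with hab | ⟨rfl, rfl⟩ | ⟨rfl, rfl⟩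
      · rw [extWt_of_edge hd hnE hab]
        rcases key with key | key | key
        · exact (hd.edge_eq hab).trans_le key
        · linarith [hd.sub_le_checkd (hvert x) (hvert y) hab]
        · linarith [hd.sub_le_checkd (hvert x) (hvert y) (hd.symm hab), hd.wt_symm hab,
            hd.hatd_comm a y, hd.hatd_comm x b]
      · rw [extWt_left]
        rcases key with key | key | key
        · exact hr₂.trans key
        · linarith [hd.hatd_nonneg a a, hd.hatd_nonneg b b]
        · linarith [hd.hatd_nonneg a b]
      · rw [extWt_right]
        rcases key with key | key | key
        · exact hr₂.trans ((hd.hatd_comm b a).trans_le key)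
        · linarith [hd.hatd_nonneg a b]
        · linarith [hd.hatd_nonneg a a, hd.hatd_nonneg b b]
    · exact nonneg_of_mem_walkSums nonneg hs

end GraphMetricPaper
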